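/- Let k be an algebraically closed field of characteristic 3, let g = sl_3(k) be the Lie algebra of traceless 3×3 matrices over k, let Z(g) be its center, and let L = g/Z(g) be the 7-dimensional quotient g-module with the action induced by the adjoint action. Then dim_k H^5(g, L) = 8. -/

import Mathlib

/-! Chevalley–Eilenberg cohomology of a Lie algebra with coefficients in a module. -/

section ChevalleyEilenberg

variable (k : Type*) [Field k]
variable (g : Type*) [LieRing g] [LieAlgebra k g]
variable (M : Type*) [AddCommGroup M] [Module k M] [LieRingModule g M] [LieModule k g M]

/-- The Chevalley–Eilenberg differential, as a raw function from alternating `n`-cochains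
to `(n+1)`-ary functions:
`dψ(l₀,…,lₙ) = Σ_{i<j} (−1)^{i+j} ψ(⁅lᵢ,lⱼ⁆, …, l̂ᵢ, …, l̂ⱼ, …) + Σ_i (−1)^i ⁅lᵢ, ψ(…, l̂ᵢ, …)⁆`
(indices written from 0; this is the paper's formula with 1-based indices shifted by one). -/
def ceD : ∀ {n : ℕ}, (g [⋀^Fin n]→ₗ[k] M) → ((Fin (n + 1) → g) → M)
  | 0, ψ, v => ⁅v 0, ψ ![]⁆
  | (n + 1), ψ, v =>
      (∑ i : Fin (n + 2), ∑ j : Fin (n + 2),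
        if h : i < j then
          ((-1 : ℤ) ^ (i.val + j.val)) •
            ψ (Fin.cons ⁅v i, v j⁆
              (fun l => v (i.succAbove
                ((j.pred (Fin.pos_iff_ne_zero.mp (lt_of_le_of_lt i.zero_le h))).succAbove l))))
        else 0)
      + ∑ i : Fin (n + 2), ((-1 : ℤ) ^ i.val) • ⁅v i, ψ (fun l => v (i.succAbove l))⁆

variable {k g M}

private lemma dite_add_zero {P : Prop} [Decidable P] {N : Type*} [AddZeroClass N]
    (A B : P → N) :
    (dite P (fun h => A h + B h) fun _ => 0) =
      (dite P A fun _ => 0) + (dite P B fun _ => 0) := by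
  split_ifs <;> simp

private lemma dite_smul_zero {P : Prop} [Decidable P] {N : Type*} [AddCommGroup N] [Module k N]
    (c : k) (A : P → N) :
    (dite P (fun h => c • A h) fun _ => 0) = c • dite P A fun _ => 0 := by
  split_ifs <;> simp

lemma ceD_add {n : ℕ} (ψ φ : g [⋀^Fin n]→ₗ[k] M) (v : Fin (n + 1) → g) :
    ceD k g M (ψ + φ) v = ceD k g M ψ v + ceD k g M φ v := by
  cases n with
  | zero => simp [ceD]
  | succ n =>
    simp only [ceD, AlternatingMap.add_apply, smul_add, lie_add, dite_add_zero,
      Finset.sum_add_distrib]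
    abel

lemma ceD_smul {n : ℕ} (c : k) (ψ : g [⋀^Fin n]→ₗ[k] M) (v : Fin (n + 1) → g) :
    ceD k g M (c • ψ) v = c • ceD k g M ψ v := by
  cases n with
  | zero => simp [ceD]
  | succ n =>
    simp only [ceD, AlternatingMap.smul_apply, lie_smul, smul_comm _ c, dite_smul_zero,
      ← Finset.smul_sum, smul_add]

lemma ceD_zero {n : ℕ} (v : Fin (n + 1) → g) :
    ceD k g M (0 : g [⋀^Fin n]→ₗ[k] M) v = 0 := by
  cases n with
  | zero => simp [ceD]
  | succ n => simp [ceD]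

variable (k g M)

/-- The space of Chevalley–Eilenberg `n`-cocycles `Zⁿ(g, M)`. -/
def ceZ (n : ℕ) : Submodule k (g [⋀^Fin n]→ₗ[k] M) where
  carrier := {ψ | ∀ v, ceD k g M ψ v = 0}
  add_mem' := by
    intro ψ φ hψ hφ v
    rw [ceD_add, hψ v, hφ v, add_zero]
  zero_mem' := fun v => ceD_zero v
  smul_mem' := by
    intro c ψ hψ v
    rw [ceD_smul, hψ v, smul_zero]

/-- The space of Chevalley–Eilenberg `n`-coboundaries `Bⁿ(g, M)`: in positive degree, the
alternating `n`-cochains that agree (as functions) with `dφ` for some `(n-1)`-cochain `φ`. -/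
def ceB : (n : ℕ) → Submodule k (g [⋀^Fin n]→ₗ[k] M)
  | 0 => ⊥
  | (n + 1) =>
      { carrier := {ψ | ∃ φ : g [⋀^Fin n]→ₗ[k] M, ∀ v, ψ v = ceD k g M φ v}
        add_mem' := by
          rintro ψ χ ⟨φ₁, h₁⟩ ⟨φ₂, h₂⟩
          exact ⟨φ₁ + φ₂, fun v => by
            rw [AlternatingMap.add_apply, h₁ v, h₂ v, ceD_add]⟩
        zero_mem' := ⟨0, fun v => by rw [AlternatingMap.zero_apply, ceD_zero]⟩
        smul_mem' := by
          rintro c ψ ⟨φ, h⟩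
          exact ⟨c • φ, fun v => by rw [AlternatingMap.smul_apply, h v, ceD_smul]⟩ }

/-- The `n`-th Chevalley–Eilenberg cohomology space `Hⁿ(g, M)`: the quotient of the space of
`n`-cocycles by the space of `n`-coboundaries (viewed inside the cocycles). -/
abbrev ceH (n : ℕ) : Type _ :=
  ↥(ceZ k g M n) ⧸ (ceB k g M n).comap (ceZ k g M n).subtype

end ChevalleyEilenberg

/-- The Lie algebra `sl₃(k)` of traceless `3 × 3` matrices over `k`. -/
abbrev sl3 (k : Type*) [Field k] := ↥(LieAlgebra.SpecialLinear.sl (Fin 3) k)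

/-- The quotient `sl₃(k)/Z(sl₃(k))` of `sl₃(k)` by its center, as a module over `sl₃(k)`
via the action induced by the adjoint action. -/
abbrev sl3ModCenter (k : Type*) [Field k] := (sl3 k) ⧸ LieAlgebra.center k (sl3 k)

/-!
Cartan's formula `ι_x d = L_x - d ι_x` determines the Chevalley–Eilenberg differential `d` by
recursion on the degree. It shows that `dψ` is alternating and that `d² = 0`, so that `H⁵` has
dimension `dim C⁵ - rank (d : C⁴ → C⁵) - rank (d : C⁵ → C⁶)`. Read on the coordinate functionals
`ψ ↦ m (ψ (b x₁, …, b xₙ))` with `x₁ < ⋯ < xₙ`, the same recursion computes the matrix of `d` from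
the structure constants. For `sl₃` and its quotient by the center these constants lie in the prime
field `𝔽₃`, so Gaussian elimination over `𝔽₃` gives the ranks over every field of characteristic
`3`. The ranks are `230` and `154`, and `dim C⁵ = 56 · 7 = 392`.
-/

namespace ChevalleyEilenberg

open Module

section LieDerivative

theorem sum_map_update_eq_zero {R V M : Type*} [CommRing R] [AddCommGroup V] [Module R V]
    [AddCommGroup M] [Module R M] {n : ℕ} (ψ : V [⋀^Fin n]→ₗ[R] M) (A : V → V) {v : Fin n → V}
    {i j : Fin n} (hv : v i = v j) (hij : i ≠ j) :
    ∑ l, ψ (Function.update v l (A (v l))) = 0 := by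
  have swap_eq : Function.update v j (A (v j)) =
      Function.update v i (A (v i)) ∘ Equiv.swap i j := by
    ext l
    rcases eq_or_ne l i with rfl | hli
    · simp [hij, hij.symm, hv]
    rcases eq_or_ne l j with rfl | hlj
    · simp [hv]
    · simp [Equiv.swap_apply_of_ne_of_ne hli hlj, hli, hlj]
  rw [Fintype.sum_eq_add i j hij fun l hl =>
    ψ.map_eq_zero_of_eq _ (by simp [hl.1.symm, hl.2.symm, hv]) hij, swap_eq, ψ.map_swap _ hij]
  exact add_neg_cancel _

variable {R g M : Type*} [CommRing R] [LieRing g] [LieAlgebra R g]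
variable [AddCommGroup M] [Module R M] [LieRingModule g M] [LieModule R g M] {n : ℕ}

theorem update_id_ad_apply (x : g) (v : Fin n → g) (i : Fin n) :
    (fun j => (Function.update (fun _ => LinearMap.id) i (LieAlgebra.ad R g x) :
      Fin n → g →ₗ[R] g) j (v j)) = Function.update v i ⁅x, v i⁆ :=
  funext (Function.apply_update (fun j (f : g →ₗ[R] g) => f (v j)) _ i _)

variable (R M n) in
/-- The Lie derivative `L_x ψ = x · ψ`: the natural action of `x : g` on the alternating maps
from `g` to `M`. -/
def lieDeriv : g →ₗ[R] Module.End R (g [⋀^Fin n]→ₗ[R] M) :=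
  LinearMap.mk₂ R
    (fun x ψ =>
      { (LieModule.toEnd R g M x).compMultilinearMap ψ.toMultilinearMap -
          ∑ i, ψ.toMultilinearMap.compLinearMap
            (Function.update (fun _ => LinearMap.id) i (LieAlgebra.ad R g x)) with
        map_eq_zero_of_eq' := fun v i j hv hij => by
          simp [update_id_ad_apply, sum_map_update_eq_zero ψ _ hv hij,
            ψ.map_eq_zero_of_eq v hv hij] })
    (fun x y ψ => by
      ext v
      simp only [AlternatingMap.coe_mk, sub_apply, LinearMap.compMultilinearMap_apply,
        AlternatingMap.coe_multilinearMap, AlternatingMap.add_apply, LieModule.toEnd_apply_apply,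
        add_lie, sum_apply, MultilinearMap.compLinearMap_apply, update_id_ad_apply,
        MultilinearMap.map_update_add, Finset.sum_add_distrib]
      abel)
    (fun c x ψ => by
      ext v
      simp [update_id_ad_apply, smul_sub, Finset.smul_sum, -map_smul])
    (fun x ψ φ => by
      ext v
      simp only [AlternatingMap.coe_mk, sub_apply, LinearMap.compMultilinearMap_apply,
        AlternatingMap.coe_multilinearMap, AlternatingMap.add_apply, LieModule.toEnd_apply_apply,
        lie_add, sum_apply, MultilinearMap.compLinearMap_apply, Finset.sum_add_distrib]
      abel)
    (fun c x ψ => by ext v; simp [smul_sub, Finset.smul_sum])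

theorem lieDeriv_apply (x : g) (ψ : g [⋀^Fin n]→ₗ[R] M) (v : Fin n → g) :
    lieDeriv R M n x ψ v = ⁅x, ψ v⁆ - ∑ i, ψ (Function.update v i ⁅x, v i⁆) := by
  change ((LieModule.toEnd R g M x).compMultilinearMap ψ.toMultilinearMap -
    ∑ i, ψ.toMultilinearMap.compLinearMap
      (Function.update (fun _ => LinearMap.id) i (LieAlgebra.ad R g x))) v = _
  simp [update_id_ad_apply]

theorem curryLeft_lieDeriv (x y : g) (ψ : g [⋀^Fin (n + 1)]→ₗ[R] M) :
    (lieDeriv R M (n + 1) x ψ).curryLeft y =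
      lieDeriv R M n x (ψ.curryLeft y) - ψ.curryLeft ⁅x, y⁆ := by
  ext v
  simp only [AlternatingMap.curryLeft_apply_apply, Matrix.vecCons, lieDeriv_apply,
    Fin.sum_univ_succ, Fin.cons_zero, Fin.update_cons_zero, Fin.cons_succ, ← Fin.cons_update,
    AlternatingMap.sub_apply]
  abel

end LieDerivative

section Differential

section Curry

variable {R V M : Type*} [CommRing R] [AddCommGroup V] [Module R V] [AddCommGroup M] [Module R M]
variable {n : ℕ}

theorem curryLeft_curryLeft_swap (ψ : V [⋀^Fin (n + 2)]→ₗ[R] M) (x y : V) :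
    (ψ.curryLeft x).curryLeft y = -(ψ.curryLeft y).curryLeft x := by
  have h := ψ.curryLeft_same (x + y)
  simp only [map_add, AlternatingMap.curryLeft_add, LinearMap.add_apply,
    AlternatingMap.curryLeft_same, zero_add, add_zero] at h
  exact eq_neg_of_add_eq_zero_right h

theorem map_vecCons_vecCons_swap (ψ : V [⋀^Fin (n + 2)]→ₗ[R] M) (x y : V) (v : Fin n → V) :
    ψ (Matrix.vecCons x (Matrix.vecCons y v)) = -ψ (Matrix.vecCons y (Matrix.vecCons x v)) :=
  DFunLike.congr_fun (curryLeft_curryLeft_swap ψ x y) v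

theorem curryLeft_sub (ψ φ : V [⋀^Fin (n + 1)]→ₗ[R] M) (x : V) :
    (ψ - φ).curryLeft x = ψ.curryLeft x - φ.curryLeft x :=
  rfl

theorem ext_curryLeft {ψ φ : V [⋀^Fin (n + 1)]→ₗ[R] M}
    (h : ∀ x, ψ.curryLeft x = φ.curryLeft x) : ψ = φ :=
  AlternatingMap.ext fun v => by
    rw [← Matrix.cons_head_tail v]
    exact DFunLike.congr_fun (h _) _

theorem apply_eq_of_curryLeft_eq {ψ φ : V [⋀^Fin (n + 1)]→ₗ[R] M} {v : Fin (n + 1) → V}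
    (i : Fin (n + 1)) (h : ψ.curryLeft (v i) = φ.curryLeft (v i)) : ψ v = φ v := by
  rw [← Fin.insertNth_self_removeNth i v, ψ.map_insertNth, φ.map_insertNth]
  exact congrArg _ (DFunLike.congr_fun h _)

/-- The alternating map `v ↦ F (v 0) (v 1, …, v n)`, for a linear family `F` such that
`F x v = 0` as soon as `x` occurs in `v`. -/
def uncurryLeft (F : V →ₗ[R] V [⋀^Fin n]→ₗ[R] M) (hF : ∀ v i, F (v i) v = 0) :
    V [⋀^Fin (n + 1)]→ₗ[R] M where
  toMultilinearMap := (AlternatingMap.toMultilinearMapLM (S := R) ∘ₗ F).uncurryLeft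
  map_eq_zero_of_eq' v i j hv hij := by
    change F (v 0) (Fin.tail v) = 0
    rcases Fin.eq_zero_or_eq_succ i with rfl | ⟨i, rfl⟩ <;>
      rcases Fin.eq_zero_or_eq_succ j with rfl | ⟨j, rfl⟩
    · exact absurd rfl hij
    · exact hv ▸ hF (Fin.tail v) j
    · exact hv ▸ hF (Fin.tail v) i
    · exact (F (v 0)).map_eq_zero_of_eq _ hv (ne_of_apply_ne Fin.succ hij)

theorem vecCons_comp_succ_succAbove {α : Type*} (x : α) (v : Fin (n + 1) → α)
    (i : Fin (n + 1)) :
    (fun l => Matrix.vecCons x v (i.succ.succAbove l)) =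
      Matrix.vecCons x fun l => v (i.succAbove l) := by
  ext l
  cases l using Fin.cases <;> simp

theorem neg_one_pow_smul_map_cons_vecCons (ψ : V [⋀^Fin (n + 2)]→ₗ[R] M) (x y : V)
    (v : Fin (n + 2) → V) {i j : Fin (n + 2)} (hj : j ≠ 0) :
    (-1 : ℤ) ^ (i.succ.val + j.succ.val) •
      ψ (Fin.cons y fun l => Matrix.vecCons x v (i.succ.succAbove (j.succAbove l))) =
    -((-1 : ℤ) ^ (i.val + j.val) • ψ.curryLeft x
      (Fin.cons y fun l => v (i.succAbove ((j.pred hj).succAbove l)))) := by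
  obtain ⟨j, rfl⟩ := Fin.exists_succ_eq.2 hj
  have omit_both : (fun l => Matrix.vecCons x v (i.succ.succAbove (j.succ.succAbove l))) =
      Matrix.vecCons x fun l => v (i.succAbove (j.succAbove l)) := by
    ext l
    cases l using Fin.cases <;> simp
  have sign : (-1 : ℤ) ^ (i.succ.val + j.succ.succ.val) = (-1) ^ (i.val + j.succ.val) := by
    simp [pow_add]
  rw [omit_both, sign, ← smul_neg]
  exact congrArg _ (map_vecCons_vecCons_swap ψ _ _ _)

theorem sum_lt_succ {S : Type*} [AddCommGroup S] (f : ∀ i j : Fin (n + 2), i < j → S) :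
    ∑ i : Fin (n + 2), ∑ j : Fin (n + 2), (if h : i < j then f i j h else 0) =
      ∑ j : Fin (n + 1), f 0 j.succ j.succ_pos +
      ∑ i : Fin (n + 1), ∑ j : Fin (n + 1),
        (if h : i < j then f i.succ j.succ (Fin.succ_lt_succ_iff.2 h) else 0) := by
  simp [Fin.sum_univ_succ (n := n + 1)]

end Curry

variable {k g M : Type*} [Field k] [LieRing g] [LieAlgebra k g]
variable [AddCommGroup M] [Module k M] [LieRingModule g M] [LieModule k g M]

/-- Cartan's formula `ι_x d + d ι_x = L_x`, where `ι_x ψ = ψ.curryLeft x`. -/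
theorem ceD_vecCons {n : ℕ} (ψ : g [⋀^Fin (n + 1)]→ₗ[k] M) (x : g) (v : Fin (n + 1) → g) :
    ceD k g M ψ (Matrix.vecCons x v) =
      lieDeriv k M (n + 1) x ψ v - ceD k g M (ψ.curryLeft x) v := by
  have bracket_head (j : Fin (n + 1)) : (-1 : ℤ) ^ (0 + j.succ.val) •
      ψ (Fin.cons ⁅x, v j⁆ fun l => v (j.succAbove l)) = -ψ (Function.update v j ⁅x, v j⁆) := by
    rw [← Fin.insertNth_removeNth, ψ.map_insertNth, zero_add, Fin.val_succ, pow_succ, mul_neg_one,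
      neg_smul]
    rfl
  have action_tail (i : Fin (n + 1)) : (-1 : ℤ) ^ i.succ.val •
      ⁅v i, ψ fun l => Matrix.vecCons x v (i.succ.succAbove l)⁆ =
        -((-1 : ℤ) ^ i.val • ⁅v i, ψ.curryLeft x fun l => v (i.succAbove l)⁆) := by
    rw [vecCons_comp_succ_succAbove, Fin.val_succ, pow_succ, mul_neg_one, neg_smul]
    rfl
  rw [ceD, sum_lt_succ, Fin.sum_univ_succ (n := n + 1), lieDeriv_apply]
  simp only [Matrix.cons_val_zero, Matrix.cons_val_succ, Fin.succAbove_zero, Fin.pred_succ,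
    Fin.val_zero, pow_zero, one_smul, bracket_head, action_tail, Finset.sum_neg_distrib]
  cases n with
  | zero =>
    rw [show ceD k g M (ψ.curryLeft x) v =
      ⁅v 0, ψ.curryLeft x fun l => v (Fin.succAbove 0 l)⁆ from
        congrArg _ (congrArg _ (Subsingleton.elim _ _))]
    simp only [Nat.reduceAdd, Fin.not_lt_zero, dite_eq_ite, if_false, Finset.univ_unique,
      Fin.default_eq_zero, Finset.sum_singleton, Fin.val_zero, pow_zero, one_smul, add_zero]
    abel
  | succ n =>
    have bracket_tail (i j : Fin (n + 2)) :
        (if i < j then (-1 : ℤ) ^ (i.succ.val + j.succ.val) •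
          ψ (Fin.cons ⁅v i, v j⁆ fun l => Matrix.vecCons x v (i.succ.succAbove (j.succAbove l)))
          else 0) =
        -(if h : i < j then (-1 : ℤ) ^ (i.val + j.val) • ψ.curryLeft x (Fin.cons ⁅v i, v j⁆
            fun l => v (i.succAbove ((j.pred h.ne_bot).succAbove l))) else 0) := by
      split_ifs with h
      · exact neg_one_pow_smul_map_cons_vecCons ψ x _ v h.ne_bot
      · exact neg_zero.symm
    simp only [dite_eq_ite, bracket_tail, ceD, Finset.sum_neg_distrib]
    abel

theorem ceD_curryLeft_vecCons_self {n : ℕ} (ψ : g [⋀^Fin (n + 1)]→ₗ[k] M) (x : g)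
    (v : Fin n → g) :
    ceD k g M (ψ.curryLeft x) (Matrix.vecCons x v) =
      lieDeriv k M (n + 1) x ψ (Matrix.vecCons x v) := by
  have lieDeriv_curry := DFunLike.congr_fun (curryLeft_lieDeriv x x ψ) v
  rw [lie_self, map_zero, sub_zero] at lieDeriv_curry
  refine Eq.trans ?_ lieDeriv_curry.symm
  cases n with
  | zero => simp [ceD, lieDeriv_apply, Subsingleton.elim v ![]]
  | succ n => rw [ceD_vecCons, ψ.curryLeft_same, ceD_zero, sub_zero]

/-- `L_x ψ` and `d (ι_x ψ)` are alternating and have the same contraction with `x`, so they agree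
on families containing `x`; by Cartan's formula this is what alternation of `dψ` amounts to. -/
theorem exists_alternatingMap_eq_ceD {n : ℕ} (ψ : g [⋀^Fin n]→ₗ[k] M) :
    ∃ χ : g [⋀^Fin (n + 1)]→ₗ[k] M, ⇑χ = ceD k g M ψ := by
  induction n with
  | zero =>
    exact ⟨AlternatingMap.ofSubsingleton k g M (0 : Fin 1)
      ((LieModule.toEnd k g M : g →ₗ[k] Module.End k M).flip (ψ ![])), rfl⟩
  | succ n ih =>
    choose d hd using ih
    let dLin : (g [⋀^Fin n]→ₗ[k] M) →ₗ[k] g [⋀^Fin (n + 1)]→ₗ[k] M :=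
      { toFun := d
        map_add' := fun φ χ => by ext v; simp [hd, ceD_add]
        map_smul' := fun c φ => by ext v; simp [hd, ceD_smul] }
    have agree (v : Fin (n + 1) → g) (i : Fin (n + 1)) :
        lieDeriv k M (n + 1) (v i) ψ v = d (ψ.curryLeft (v i)) v := by
      refine apply_eq_of_curryLeft_eq i (AlternatingMap.ext fun w => ?_)
      simpa [hd] using (ceD_curryLeft_vecCons_self ψ (v i) w).symm
    refine ⟨uncurryLeft ((lieDeriv k M (n + 1)).flip ψ - dLin ∘ₗ ψ.curryLeft)
      fun v i => sub_eq_zero.2 (agree v i), funext fun v => ?_⟩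
    rw [← Matrix.cons_head_tail v, ceD_vecCons, ← hd]
    rfl

variable (k g M) in
/-- The Chevalley–Eilenberg differential as a linear map between the spaces of cochains. -/
noncomputable def ceDiff (n : ℕ) : (g [⋀^Fin n]→ₗ[k] M) →ₗ[k] g [⋀^Fin (n + 1)]→ₗ[k] M where
  toFun ψ := (exists_alternatingMap_eq_ceD ψ).choose
  map_add' ψ φ := by
    ext v
    simp [(exists_alternatingMap_eq_ceD _).choose_spec, ceD_add]
  map_smul' c ψ := by
    ext v
    simp [(exists_alternatingMap_eq_ceD _).choose_spec, ceD_smul]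

theorem coe_ceDiff {n : ℕ} (ψ : g [⋀^Fin n]→ₗ[k] M) : ⇑(ceDiff k g M n ψ) = ceD k g M ψ :=
  (exists_alternatingMap_eq_ceD ψ).choose_spec

theorem curryLeft_ceDiff {n : ℕ} (ψ : g [⋀^Fin (n + 1)]→ₗ[k] M) (x : g) :
    (ceDiff k g M (n + 1) ψ).curryLeft x =
      lieDeriv k M (n + 1) x ψ - ceDiff k g M n (ψ.curryLeft x) := by
  ext v
  simp [coe_ceDiff, ceD_vecCons]

theorem ceDiff_zero_apply (ψ : g [⋀^Fin 0]→ₗ[k] M) (v : Fin 1 → g) :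
    ceDiff k g M 0 ψ v = ⁅v 0, ψ ![]⁆ := by
  rw [coe_ceDiff]
  rfl

theorem curryLeft_ceDiff_zero (ψ : g [⋀^Fin 0]→ₗ[k] M) (x : g) :
    (ceDiff k g M 0 ψ).curryLeft x = lieDeriv k M 0 x ψ := by
  ext v
  simp [ceDiff_zero_apply, lieDeriv_apply, Subsingleton.elim v ![]]

theorem lieDeriv_lie {n : ℕ} (x y : g) (ψ : g [⋀^Fin n]→ₗ[k] M) :
    lieDeriv k M n ⁅x, y⁆ ψ =
      lieDeriv k M n x (lieDeriv k M n y ψ) - lieDeriv k M n y (lieDeriv k M n x ψ) := by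
  induction n with
  | zero =>
    ext v
    simp [lieDeriv_apply]
  | succ n ih =>
    refine ext_curryLeft fun z => ?_
    simp only [curryLeft_lieDeriv, curryLeft_sub, map_sub, ih, leibniz_lie x y z, map_add]
    abel

theorem ceDiff_lieDeriv {n : ℕ} (x : g) (ψ : g [⋀^Fin n]→ₗ[k] M) :
    ceDiff k g M n (lieDeriv k M n x ψ) = lieDeriv k M (n + 1) x (ceDiff k g M n ψ) := by
  induction n with
  | zero =>
    ext v
    simp [lieDeriv_apply, ceDiff_zero_apply]
  | succ n ih =>
    refine ext_curryLeft fun y => ?_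
    simp only [curryLeft_lieDeriv, curryLeft_ceDiff, map_sub, ih, lieDeriv_lie]
    abel

theorem ceDiff_ceDiff {n : ℕ} (ψ : g [⋀^Fin n]→ₗ[k] M) :
    ceDiff k g M (n + 1) (ceDiff k g M n ψ) = 0 := by
  induction n with
  | zero =>
    refine ext_curryLeft fun x => ?_
    simp [curryLeft_ceDiff, curryLeft_ceDiff_zero, ceDiff_lieDeriv]
  | succ n ih =>
    refine ext_curryLeft fun y => ?_
    simp [curryLeft_ceDiff, map_sub, ih, ceDiff_lieDeriv]

end Differential

section Cohomology

theorem finrank_alternatingMap (R V M : Type*) [CommRing R] [Nontrivial R] [AddCommGroup V]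
    [Module R V] [Module.Free R V] [Module.Finite R V] [AddCommGroup M] [Module R M]
    [Module.Free R M] [Module.Finite R M] (n : ℕ) :
    finrank R (V [⋀^Fin n]→ₗ[R] M) = (finrank R V).choose n * finrank R M := by
  rw [exteriorPower.alternatingMapLinearEquiv.finrank_eq, finrank_linearMap,
    exteriorPower.finrank_eq]

instance finite_alternatingMap {R V M : Type*} [CommRing R] [AddCommGroup V] [Module R V]
    [Module.Free R V] [Module.Finite R V] [AddCommGroup M] [Module R M] [Module.Free R M]
    [Module.Finite R M] (n : ℕ) : Module.Finite R (V [⋀^Fin n]→ₗ[R] M) :=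
  Module.Finite.equiv exteriorPower.alternatingMapLinearEquiv.symm

variable (k g M : Type*) [Field k] [LieRing g] [LieAlgebra k g]
variable [AddCommGroup M] [Module k M] [LieRingModule g M] [LieModule k g M]

theorem ceZ_eq_ker (n : ℕ) : ceZ k g M n = LinearMap.ker (ceDiff k g M n) := by
  ext ψ
  simp [ceZ, ← coe_ceDiff, ← DFunLike.coe_fn_eq, funext_iff]

theorem ceB_succ_eq_range (n : ℕ) : ceB k g M (n + 1) = LinearMap.range (ceDiff k g M n) := by
  ext ψ
  simp [ceB, ← coe_ceDiff, ← DFunLike.coe_fn_eq, funext_iff, eq_comm]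

theorem finrank_ceH_succ_add_ranks [FiniteDimensional k g] [FiniteDimensional k M] (n : ℕ) :
    finrank k (ceH k g M (n + 1)) + finrank k (LinearMap.range (ceDiff k g M n)) +
      finrank k (LinearMap.range (ceDiff k g M (n + 1))) =
        (finrank k g).choose (n + 1) * finrank k M := by
  have ceB_le_ceZ : ceB k g M (n + 1) ≤ ceZ k g M (n + 1) := by
    rw [ceB_succ_eq_range, ceZ_eq_ker, LinearMap.range_le_ker_iff]
    exact LinearMap.ext ceDiff_ceDiff
  rw [← finrank_alternatingMap, ← ceB_succ_eq_range,
    ← (Submodule.comapSubtypeEquivOfLe ceB_le_ceZ).finrank_eq,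
    Submodule.finrank_quotient_add_finrank, ceZ_eq_ker, add_comm,
    LinearMap.finrank_range_add_finrank_ker]

end Cohomology

/-- A formal linear combination of elements of `α` with coefficients in `R`, as a list of
coefficient–key pairs in which keys may be repeated. -/
abbrev FormalSum (R α : Type*) := List (R × α)

namespace FormalSum

section Basic

variable {R α β γ : Type*}

/-- Renaming of the keys of a formal sum. -/
def mapKeys (h : α → β) (l : FormalSum R α) : FormalSum R β :=
  l.map fun t => (t.1, h t.2)

theorem forall_mem_mapKeys {P : β → Prop} {h : α → β} {l : FormalSum R α}
    (H : ∀ t ∈ l, P (h t.2)) : ∀ t ∈ mapKeys h l, P t.2 :=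
  List.forall_mem_map.2 H

variable [Semiring R]

/-- Multiplication of a formal sum by a scalar. -/
def scale (c : R) (l : FormalSum R α) : FormalSum R α :=
  l.map fun t => (c * t.1, t.2)

/-- Linear substitution of a formal sum for each key. -/
def bind (l : FormalSum R α) (h : α → FormalSum R β) : FormalSum R β :=
  l.flatMap fun t => scale t.1 (h t.2)

/-- The formal sum `∑ x ∈ l, c x • x`, with the zero coefficients left out. -/
def ofFn [DecidableEq R] (c : α → R) (l : List α) : FormalSum R α :=
  (l.map fun x => (c x, x)).filter fun t => t.1 ≠ 0

theorem forall_mem_scale {P : α → Prop} {c : R} {l : FormalSum R α} (H : ∀ t ∈ l, P t.2) :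
    ∀ t ∈ scale c l, P t.2 :=
  List.forall_mem_map.2 H

theorem forall_mem_bind {P : β → Prop} {l : FormalSum R α} {h : α → FormalSum R β}
    (H : ∀ t ∈ l, ∀ u ∈ h t.2, P u.2) : ∀ u ∈ bind l h, P u.2 := by
  intro u hu
  obtain ⟨t, ht, hu⟩ := List.mem_flatMap.1 hu
  exact forall_mem_scale (H t ht) u hu

variable {S V W : Type*} [Semiring S] [AddCommMonoid V] [Module S V]
variable [AddCommMonoid W] [Module S W]

/-- The value of a formal sum when the keys are vectors and the coefficients act through `σ`. -/
def eval (σ : R →+* S) (f : α → V) (l : FormalSum R α) : V :=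
  (l.map fun t => σ t.1 • f t.2).sum

variable (σ : R →+* S) (f : α → V) (l l' : FormalSum R α)

@[simp]
theorem eval_nil : eval σ f [] = 0 :=
  rfl

@[simp]
theorem eval_cons (t : R × α) : eval σ f (t :: l) = σ t.1 • f t.2 + eval σ f l :=
  List.sum_cons

@[simp]
theorem eval_append : eval σ f (l ++ l') = eval σ f l + eval σ f l' := by
  simp [eval]

@[simp]
theorem eval_scale (c : R) : eval σ f (scale c l) = σ c • eval σ f l := by
  induction l with
  | nil => simp [scale]
  | cons t l ih =>
    rw [eval_cons, smul_add, ← ih, smul_smul, ← map_mul]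
    rfl

@[simp]
theorem eval_mapKeys (h : γ → α) (l : FormalSum R γ) :
    eval σ f (mapKeys h l) = eval σ (f ∘ h) l := by
  simp [eval, mapKeys, Function.comp_def]

@[simp]
theorem eval_bind (l : FormalSum R γ) (h : γ → FormalSum R α) :
    eval σ f (bind l h) = eval σ (fun a => eval σ f (h a)) l := by
  induction l with
  | nil => rfl
  | cons t l ih =>
    rw [eval_cons, ← ih, ← eval_scale, ← eval_append]
    rfl

@[simp]
theorem eval_zero : eval σ (fun _ => (0 : V)) l = 0 := by
  simp [eval]

theorem eval_ofFn [DecidableEq R] (c : α → R) (l : List α) :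
    eval σ f (ofFn c l) = (l.map fun x => σ (c x) • f x).sum := by
  induction l with
  | nil => rfl
  | cons x l ih =>
    rw [List.map_cons, List.sum_cons, ← ih]
    by_cases hx : c x = 0 <;> simp [ofFn, hx]

theorem map_eval {F : Type*} [FunLike F V W] [LinearMapClass F S V W] (T : F) :
    T (eval σ f l) = eval σ (fun a => T (f a)) l := by
  induction l with
  | nil => exact map_zero T
  | cons t l ih => simp [ih]

theorem eval_congr {f f' : α → V} (h : ∀ t ∈ l, f t.2 = f' t.2) : eval σ f l = eval σ f' l :=
  congrArg List.sum (List.map_congr_left fun t ht => by rw [h t ht])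

end Basic

end FormalSum

section Words

open FormalSum

section Combinatorics

variable {R ι μ : Type*} [Ring R] [LinearOrder ι]

/-- The product `x ∧ w` of a letter and a strictly increasing word, in terms of strictly
increasing words. -/
def wedge (x : ι) : List ι → FormalSum R (List ι)
  | [] => [(1, [x])]
  | y :: w =>
    if x < y then [(1, x :: y :: w)]
    else if x = y then []
    else scale (-1) (mapKeys (y :: ·) (wedge x w))

/-- The derivation of the exterior algebra extending the bracket `br x` on letters. -/
def adWord (br : ι → ι → FormalSum R ι) (x : ι) : List ι → FormalSum R (List ι)
  | [] => []
  | y :: w => bind (br x y) (wedge · w) ++ bind (adWord br x w) (wedge y)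

/-- The boundary dual to the Chevalley–Eilenberg differential: a pair `(w, m)` stands for the
functional `ψ ↦ m (ψ w)` on cochains, and the recursion is Cartan's formula `ι_x d = L_x - d ι_x`.
Here `act x m` is the functional `m ∘ x`. -/
def boundary (br : ι → ι → FormalSum R ι) (act : ι → μ → FormalSum R μ) :
    List ι → μ → FormalSum R (List ι × μ)
  | [], _ => []
  | x :: w, m =>
    mapKeys (w, ·) (act x m) ++
      scale (-1) (mapKeys (·, m) (adWord br x w) ++
        bind (boundary br act w m) fun u => mapKeys (·, u.2) (wedge x u.1))

theorem perm_of_mem_wedge {x : ι} {w : List ι} : ∀ t ∈ wedge (R := R) x w, t.2.Perm (x :: w) := by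
  induction w with
  | nil => simp [wedge]
  | cons y w ih =>
    rw [wedge]
    split_ifs
    · simp
    · simp
    · let P : List ι → Prop := (List.Perm · (x :: y :: w))
      exact forall_mem_scale (P := P) (forall_mem_mapKeys (P := P) fun t ht =>
        ((ih t ht).cons y).trans (List.Perm.swap x y w))

theorem sorted_of_mem_wedge {x : ι} {w : List ι} (hw : w.Pairwise (· < ·)) :
    ∀ t ∈ wedge (R := R) x w, t.2.Pairwise (· < ·) := by
  induction w with
  | nil => simp [wedge]
  | cons y w ih =>
    rw [wedge]
    split_ifs with hxy heq
    · have x_lt : ∀ z ∈ w, x < z := fun z hz => hxy.trans (List.rel_of_pairwise_cons hw hz)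
      simpa [hxy] using ⟨x_lt, List.pairwise_cons.1 hw⟩
    · simp
    · refine forall_mem_scale (P := List.Pairwise (· < ·)) (forall_mem_mapKeys fun t ht => ?_)
      have y_lt : ∀ z ∈ x :: w, y < z := List.forall_mem_cons.2
        ⟨lt_of_le_of_ne (not_lt.1 hxy) (Ne.symm heq), fun z => List.rel_of_pairwise_cons hw⟩
      exact (ih hw.of_cons t ht).cons fun z hz => y_lt z ((perm_of_mem_wedge t ht).subset hz)

/-- A word of length `n` with strictly increasing letters; for `n` letters `x₁ < ⋯ < xₙ` it stands
for the `n`-vector `x₁ ∧ ⋯ ∧ xₙ`. -/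
def IsIncreasingWord (n : ℕ) (w : List ι) : Prop :=
  w.Pairwise (· < ·) ∧ w.length = n

theorem isIncreasingWord_of_mem_wedge {n : ℕ} {x : ι} {w : List ι} (hw : IsIncreasingWord n w) :
    ∀ t ∈ wedge (R := R) x w, IsIncreasingWord (n + 1) t.2 := fun t ht =>
  ⟨sorted_of_mem_wedge hw.1 t ht, by simp [(perm_of_mem_wedge t ht).length_eq, hw.2]⟩

theorem IsIncreasingWord.of_cons {n : ℕ} {x : ι} {w : List ι}
    (hw : IsIncreasingWord (n + 1) (x :: w)) : IsIncreasingWord n w :=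
  ⟨hw.1.of_cons, Nat.succ.inj hw.2⟩

variable {br : ι → ι → FormalSum R ι} {act : ι → μ → FormalSum R μ} {n : ℕ}

theorem isIncreasingWord_of_mem_adWord {x : ι} {w : List ι} (hw : IsIncreasingWord n w) :
    ∀ t ∈ adWord br x w, IsIncreasingWord n t.2 := by
  induction w generalizing n with
  | nil => simp [adWord]
  | cons y w ih =>
    obtain - | n := n
    · exact absurd hw.2 (by simp)
    rw [adWord, List.forall_mem_append]
    exact ⟨forall_mem_bind fun z _ => isIncreasingWord_of_mem_wedge hw.of_cons,
      forall_mem_bind fun t ht => isIncreasingWord_of_mem_wedge (ih hw.of_cons t ht)⟩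

theorem isIncreasingWord_of_mem_boundary {w : List ι} {m : μ} (hw : IsIncreasingWord (n + 1) w) :
    ∀ t ∈ boundary br act w m, IsIncreasingWord n t.2.1 := by
  induction w generalizing n with
  | nil => simp [boundary]
  | cons x w ih =>
    let P : List ι × μ → Prop := fun u => IsIncreasingWord n u.1
    rw [boundary, List.forall_mem_append]
    refine ⟨forall_mem_mapKeys (P := P) fun _ _ => hw.of_cons, forall_mem_scale (P := P) ?_⟩
    rw [List.forall_mem_append]
    refine ⟨forall_mem_mapKeys (P := P) (isIncreasingWord_of_mem_adWord hw.of_cons),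
      forall_mem_bind (P := P) fun t ht => forall_mem_mapKeys (P := P) ?_⟩
    obtain - | n := n
    · obtain rfl := List.eq_nil_of_length_eq_zero hw.of_cons.2
      simp [boundary] at ht
    · exact isIncreasingWord_of_mem_wedge (ih hw.of_cons t ht)

/-- The increasing words of length `n` in the letters `0, …, N - 1`. -/
def increasingWords (N n : ℕ) : List (List (Fin N)) :=
  (List.finRange N).sublistsLen n

theorem mem_increasingWords {N n : ℕ} {w : List (Fin N)} :
    w ∈ increasingWords N n ↔ IsIncreasingWord n w := by
  rw [increasingWords, List.mem_sublistsLen, IsIncreasingWord]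
  refine and_congr_left fun _ => ⟨fun h => (List.pairwise_lt_finRange N).sublist h, fun h => ?_⟩
  have subperm : w.Subperm (List.finRange N) :=
    List.subperm_of_subset (h.imp ne_of_lt) fun x _ => List.mem_finRange x
  exact List.sublist_of_subperm_of_pairwise subperm h (List.pairwise_lt_finRange N)

theorem card_toFinset_increasingWords (N n : ℕ) :
    (increasingWords N n).toFinset.card = N.choose n := by
  rw [increasingWords,
    List.toFinset_card_of_nodup (List.nodup_sublistsLen n (List.nodup_finRange N)),
    List.length_sublistsLen, List.length_finRange]

end Combinatorics

section Evaluation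

variable {R k V ι : Type*} [Ring R] [CommRing k] [AddCommGroup V] [Module k V]

/-- The evaluation `ψ ↦ ψ (b x₁, …, b xₙ)` of alternating maps on the word `x₁ ⋯ xₙ` in a family
`b` of vectors, with value `0` for words whose length is not `n`. -/
def evalWord (M : Type*) [AddCommGroup M] [Module k M] (b : ι → V) :
    ∀ n : ℕ, List ι → (V [⋀^Fin n]→ₗ[k] M) →ₗ[k] M
  | 0, [] => AlternatingMap.constLinearEquivOfIsEmpty.symm.toLinearMap
  | n + 1, x :: w => evalWord M b n w ∘ₗ AlternatingMap.curryLeftLinearMap.flip (b x)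
  | _, _ => 0

variable {M : Type*} [AddCommGroup M] [Module k M] (b : ι → V)

@[simp]
theorem evalWord_zero_cons (x : ι) (w : List ι) : evalWord (k := k) M b 0 (x :: w) = 0 :=
  rfl

@[simp]
theorem evalWord_succ_nil (n : ℕ) : evalWord (k := k) M b (n + 1) [] = 0 :=
  rfl

@[simp]
theorem evalWord_zero_nil_apply (ψ : V [⋀^Fin 0]→ₗ[k] M) : evalWord M b 0 [] ψ = ψ ![] :=
  congrArg ψ (Subsingleton.elim _ _)

@[simp]
theorem evalWord_succ_cons_apply {n : ℕ} (x : ι) (w : List ι) (ψ : V [⋀^Fin (n + 1)]→ₗ[k] M) :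
    evalWord M b (n + 1) (x :: w) ψ = evalWord M b n w (ψ.curryLeft (b x)) :=
  rfl

theorem evalWord_swap (n : ℕ) (x y : ι) (w : List ι) :
    evalWord (k := k) M b n (x :: y :: w) = -evalWord M b n (y :: x :: w) := by
  ext ψ
  match n, ψ with
  | 0, _ => simp
  | 1, _ => simp
  | n + 2, ψ => simp [curryLeft_curryLeft_swap ψ (b x)]

theorem evalWord_self (n : ℕ) (x : ι) (w : List ι) :
    evalWord (k := k) M b n (x :: x :: w) = 0 := by
  ext ψ
  match n, ψ with
  | 0, _ => simp
  | 1, _ => simp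
  | n + 2, ψ => simp

/-- The functional `ψ ↦ f m (ψ w)` on alternating maps encoded by a word `w` and an index `m`. -/
def coordFun {μ : Type*} (b : ι → V) (f : μ → Dual k M) (n : ℕ) (q : List ι × μ) :
    Dual k (V [⋀^Fin n]→ₗ[k] M) :=
  f q.2 ∘ₗ evalWord M b n q.1

variable [LinearOrder ι] (σ : R →+* k)

theorem eval_wedge_apply {n : ℕ} (x : ι) (w : List ι) (ψ : V [⋀^Fin n]→ₗ[k] M) :
    eval σ (fun u => evalWord M b n u ψ) (wedge x w) = evalWord M b n (x :: w) ψ := by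
  induction w generalizing n with
  | nil => simp [wedge]
  | cons y w ih =>
    rw [wedge]
    split_ifs with hxy heq
    · simp
    · simp [heq, evalWord_self]
    · rw [evalWord_swap, eval_scale, eval_mapKeys, Function.comp_def]
      match n, ψ with
      | 0, _ => simp
      | n + 1, ψ => simp [ih]

theorem eq_zero_of_evalWord_eq_zero [Finite ι] {n : ℕ} (b : Basis ι k V)
    {ψ : V [⋀^Fin n]→ₗ[k] M} (h : ∀ w, IsIncreasingWord n w → evalWord M b n w ψ = 0) : ψ = 0 := by
  induction n with
  | zero =>
    ext v
    simpa [Subsingleton.elim v ![]] using h [] ⟨List.Pairwise.nil, rfl⟩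
  | succ n ih =>
    have curry_basis (x : ι) : ψ.curryLeft (b x) = 0 := ih fun w hw => by
      rw [← evalWord_succ_cons_apply, ← eval_wedge_apply b (RingHom.id k)]
      rw [eval_congr (f' := fun _ => 0) _ _ fun t ht => h _ (isIncreasingWord_of_mem_wedge hw t ht)]
      exact eval_zero _ _
    have curry_eq_zero : ψ.curryLeft = 0 := b.ext curry_basis
    exact ext_curryLeft fun x => by simp [curry_eq_zero]

end Evaluation

section Lie

variable {R k g M ι μ : Type*} [Ring R] [Field k] [LieRing g] [LieAlgebra k g]
variable [AddCommGroup M] [Module k M] [LieRingModule g M] [LieModule k g M] [LinearOrder ι]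
variable {σ : R →+* k} {b : ι → g} {br : ι → ι → FormalSum R ι}

theorem evalWord_lieDeriv (hbr : ∀ x y, ⁅b x, b y⁆ = eval σ b (br x y)) {n : ℕ} (x : ι)
    (w : List ι) (ψ : g [⋀^Fin n]→ₗ[k] M) :
    evalWord M b n w (lieDeriv k M n (b x) ψ) =
      ⁅b x, evalWord M b n w ψ⁆ - eval σ (fun u => evalWord M b n u ψ) (adWord br x w) := by
  induction w generalizing n with
  | nil => cases n <;> simp [adWord, lieDeriv_apply]
  | cons y w ih =>
    cases n with
    | zero => simp [adWord, eval_wedge_apply]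
    | succ n =>
      have bracket_term : evalWord M b n w (ψ.curryLeft ⁅b x, b y⁆) =
          eval σ (fun z => evalWord M b n w (ψ.curryLeft (b z))) (br x y) := by
        rw [hbr, map_eval, map_eval]
      simp only [adWord, evalWord_succ_cons_apply, curryLeft_lieDeriv, map_sub, ih, bracket_term,
        eval_append, eval_bind, eval_wedge_apply]
      abel

theorem eval_coordFun_boundary {f : μ → Dual k M} {act : ι → μ → FormalSum R μ}
    (hbr : ∀ x y, ⁅b x, b y⁆ = eval σ b (br x y))
    (hact : ∀ x m u, f m ⁅b x, u⁆ = eval σ (fun m' => f m' u) (act x m)) {n : ℕ} (w : List ι)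
    (m : μ) (ψ : g [⋀^Fin n]→ₗ[k] M) :
    eval σ (fun q => coordFun b f n q ψ) (boundary br act w m) =
      coordFun b f (n + 1) (w, m) (ceDiff k g M n ψ) := by
  induction w generalizing n with
  | nil => simp [boundary, coordFun]
  | cons x w ih =>
    have lie_term : f m (evalWord M b n w (lieDeriv k M n (b x) ψ)) =
        eval σ (fun m' => f m' (evalWord M b n w ψ)) (act x m) -
          eval σ (fun u => f m (evalWord M b n u ψ)) (adWord br x w) := by
      rw [evalWord_lieDeriv hbr, map_sub, hact, map_eval]
    have wedge_term (u : List ι × μ) :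
        eval σ (fun v => f u.2 (evalWord M b n v ψ)) (wedge x u.1) =
          f u.2 (evalWord M b n (x :: u.1) ψ) := by
      rw [← map_eval, eval_wedge_apply]
    simp only [coordFun, LinearMap.comp_apply] at ih
    simp only [boundary, coordFun, LinearMap.comp_apply, Function.comp_def, eval_append,
      eval_mapKeys, eval_scale, map_neg, map_one, neg_one_smul, eval_bind, wedge_term,
      evalWord_succ_cons_apply]
    cases n with
    | zero => simp [curryLeft_ceDiff_zero, lie_term, sub_eq_add_neg]
    | succ n =>
      simp only [evalWord_succ_cons_apply, ih, curryLeft_ceDiff, map_sub, lie_term]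
      abel

end Lie

end Words

section Elimination

section Span

theorem span_sup_span_sub_smul {R V : Type*} [Ring R] [AddCommGroup V] [Module R V] (v w : V)
    (c : R) : Submodule.span R {w} ⊔ Submodule.span R {v - c • w} =
      Submodule.span R {v} ⊔ Submodule.span R {w} := by
  simp only [← Submodule.span_insert]
  refine le_antisymm (Submodule.span_le.2 ?_) (Submodule.span_le.2 ?_) <;>
    simp only [Set.insert_subset_iff, Set.singleton_subset_iff, SetLike.mem_coe,
      Submodule.mem_span_pair]
  · exact ⟨⟨0, 1, by simp⟩, 1, -c, by simp [sub_eq_add_neg]⟩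
  · exact ⟨⟨c, 1, by simp⟩, 1, 0, by simp⟩

theorem finrank_span_singleton_sup {k V : Type*} [Field k] [AddCommGroup V] [Module k V] {v : V}
    {W : Submodule k V} [FiniteDimensional k W] (hv : v ∉ W) :
    finrank k ↥(Submodule.span k {v} ⊔ W) = finrank k W + 1 := by
  have v_ne_zero : v ≠ 0 := ne_of_mem_of_not_mem W.zero_mem hv |>.symm
  have inf_eq_bot : Submodule.span k {v} ⊓ W = ⊥ :=
    ((Submodule.disjoint_span_singleton' v_ne_zero).2 hv).symm.eq_bot
  rw [← add_zero (finrank k _), ← finrank_bot k V, ← inf_eq_bot,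
    Submodule.finrank_sup_add_finrank_inf_eq, finrank_span_singleton v_ne_zero, add_comm]

end Span

namespace FormalSum

section Normalization

variable {R α : Type*} [Semiring R]

section Terms

variable {S V : Type*} [Semiring S] [AddCommMonoid V] [Module S V] (σ : R →+* S) (f : α → V)

theorem eval_mem_span {s : Set α} {l : FormalSum R α} (hl : ∀ t ∈ l, t.2 ∈ s) :
    eval σ f l ∈ Submodule.span S (f '' s) :=
  list_sum_mem (List.forall_mem_map.2 fun t ht =>
    Submodule.smul_mem _ _ (Submodule.subset_span ⟨t.2, hl t ht, rfl⟩))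

variable [DecidableEq R]

/-- Prepends the term `c • q`, unless it vanishes. -/
def consTerm (c : R) (q : α) (l : FormalSum R α) : FormalSum R α :=
  if c = 0 then l else (c, q) :: l

theorem forall_mem_consTerm {P : α → Prop} {c : R} {q : α} {l : FormalSum R α} (hq : P q)
    (hl : ∀ t ∈ l, P t.2) : ∀ t ∈ consTerm c q l, P t.2 := by
  rw [consTerm]
  split_ifs
  · exact hl
  · exact List.forall_mem_cons.2 ⟨hq, hl⟩

@[simp]
theorem eval_consTerm (c : R) (q : α) (l : FormalSum R α) :
    eval σ f (consTerm c q l) = σ c • f q + eval σ f l := by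
  rw [consTerm]
  split_ifs with hc <;> simp [hc]

end Terms

section Reduced

variable [LinearOrder α]

/-- A formal sum with strictly increasing keys and nonzero coefficients. -/
def IsReduced (l : FormalSum R α) : Prop :=
  l.Pairwise (fun s t => s.2 < t.2) ∧ ∀ t ∈ l, t.1 ≠ 0

namespace IsReduced

variable {l : FormalSum R α} {s : R × α}

theorem nil : IsReduced ([] : FormalSum R α) :=
  ⟨List.Pairwise.nil, by simp⟩

theorem cons (hs : s.1 ≠ 0) (hsl : ∀ t ∈ l, s.2 < t.2) (hl : IsReduced l) : IsReduced (s :: l) :=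
  ⟨hl.1.cons hsl, List.forall_mem_cons.2 ⟨hs, hl.2⟩⟩

theorem of_cons (h : IsReduced (s :: l)) : IsReduced l :=
  ⟨h.1.of_cons, (List.forall_mem_cons.1 h.2).2⟩

theorem ne_zero_of_cons (h : IsReduced (s :: l)) : s.1 ≠ 0 :=
  h.2 s List.mem_cons_self

theorem lt_of_cons (h : IsReduced (s :: l)) : ∀ t ∈ l, s.2 < t.2 :=
  fun _ => List.rel_of_pairwise_cons h.1

end IsReduced

end Reduced

variable [DecidableEq R] [LinearOrder α]

/-- Adds the term `c • q` to a formal sum with increasing keys. -/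
def insertTerm (c : R) (q : α) : FormalSum R α → FormalSum R α
  | [] => consTerm c q []
  | s :: l =>
    if q < s.2 then consTerm c q (s :: l)
    else if s.2 < q then s :: insertTerm c q l
    else consTerm (c + s.1) q l

/-- Adds the terms of `l` to `l'`; the result is reduced if `l'` is. -/
def add (l l' : FormalSum R α) : FormalSum R α :=
  l.foldr (fun t => insertTerm t.1 t.2) l'

/-- The reduced form of a formal sum. -/
def normalize (l : FormalSum R α) : FormalSum R α :=
  add l []

theorem forall_mem_insertTerm {P : α → Prop} {c : R} {q : α} {l : FormalSum R α} (hq : P q)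
    (hl : ∀ t ∈ l, P t.2) : ∀ t ∈ insertTerm c q l, P t.2 := by
  induction l with
  | nil => exact forall_mem_consTerm hq hl
  | cons s l ih =>
    obtain ⟨hs, hl'⟩ := List.forall_mem_cons.1 hl
    rw [insertTerm]
    split_ifs
    · exact forall_mem_consTerm hq hl
    · exact List.forall_mem_cons.2 ⟨hs, ih hl'⟩
    · exact forall_mem_consTerm hq hl'

theorem forall_mem_add {P : α → Prop} {l l' : FormalSum R α} (hl : ∀ t ∈ l, P t.2)
    (hl' : ∀ t ∈ l', P t.2) : ∀ t ∈ add l l', P t.2 := by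
  induction l with
  | nil => exact hl'
  | cons s l ih =>
    obtain ⟨hs, hl⟩ := List.forall_mem_cons.1 hl
    exact forall_mem_insertTerm hs (ih hl)

theorem forall_mem_normalize {P : α → Prop} {l : FormalSum R α} (hl : ∀ t ∈ l, P t.2) :
    ∀ t ∈ normalize l, P t.2 :=
  forall_mem_add hl (by simp)

namespace IsReduced

variable {l l' : FormalSum R α} {c : R} {q : α}

theorem consTerm (hq : ∀ t ∈ l, q < t.2) (hl : IsReduced l) : IsReduced (consTerm c q l) := by
  rw [FormalSum.consTerm]
  split_ifs with hc
  · exact hl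
  · exact hl.cons hc hq

theorem insertTerm (hl : IsReduced l) : IsReduced (insertTerm c q l) := by
  induction l with
  | nil => exact hl.consTerm (by simp)
  | cons s l ih =>
    rw [FormalSum.insertTerm]
    split_ifs with hqs hsq
    · exact hl.consTerm (List.forall_mem_cons.2 ⟨hqs, fun t ht => hqs.trans (hl.lt_of_cons t ht)⟩)
    · exact (ih hl.of_cons).cons hl.ne_zero_of_cons (forall_mem_insertTerm hsq hl.lt_of_cons)
    · obtain rfl : q = s.2 := le_antisymm (not_lt.1 hsq) (not_lt.1 hqs)
      exact hl.of_cons.consTerm hl.lt_of_cons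

theorem add (l : FormalSum R α) (hl' : IsReduced l') : IsReduced (add l l') := by
  induction l with
  | nil => exact hl'
  | cons s l ih => exact ih.insertTerm

end IsReduced

theorem isReduced_normalize (l : FormalSum R α) : IsReduced (normalize l) :=
  IsReduced.nil.add l

variable {S V : Type*} [Semiring S] [AddCommMonoid V] [Module S V] (σ : R →+* S) (f : α → V)

@[simp]
theorem eval_insertTerm (c : R) (q : α) (l : FormalSum R α) :
    eval σ f (insertTerm c q l) = σ c • f q + eval σ f l := by
  induction l with
  | nil => simp [insertTerm]
  | cons s l ih =>
    rw [insertTerm]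
    split_ifs with hqs hsq
    · simp
    · simp [ih, add_left_comm]
    · obtain rfl : q = s.2 := le_antisymm (not_lt.1 hsq) (not_lt.1 hqs)
      simp [add_smul, add_assoc]

@[simp]
theorem eval_add (l l' : FormalSum R α) : eval σ f (add l l') = eval σ f l + eval σ f l' := by
  induction l with
  | nil => simp [add]
  | cons s l ih =>
    rw [eval_cons, add_assoc, ← ih, ← eval_insertTerm]
    rfl

@[simp]
theorem eval_normalize (l : FormalSum R α) : eval σ f (normalize l) = eval σ f l := by
  simp [normalize]

end Normalization

section RowSpan

variable {R k V α : Type*} [Semiring R] [CommRing k] [AddCommGroup V] [Module k V]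
variable (σ : R →+* k) (f : α → V)

/-- The span of the vectors represented by the rows in a list. -/
def rowSpan (P : List (FormalSum R α)) : Submodule k V :=
  Submodule.span k (eval σ f '' {r | r ∈ P})

@[simp]
theorem rowSpan_nil : rowSpan σ f ([] : List (FormalSum R α)) = ⊥ := by
  simp [rowSpan]

@[simp]
theorem rowSpan_cons (r : FormalSum R α) (P : List (FormalSum R α)) :
    rowSpan σ f (r :: P) = Submodule.span k {eval σ f r} ⊔ rowSpan σ f P := by
  rw [rowSpan, rowSpan, ← Submodule.span_insert, ← Set.image_insert_eq]
  congr 2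
  ext
  simp

instance finite_rowSpan (P : List (FormalSum R α)) : Module.Finite k (rowSpan σ f P) :=
  Module.Finite.span_of_finite k ((List.finite_toSet P).image _)

theorem rowSpan_le_span_image {s : Set α} {P : List (FormalSum R α)}
    (hP : ∀ p ∈ P, ∀ u ∈ p, u.2 ∈ s) : rowSpan σ f P ≤ Submodule.span k (f '' s) :=
  Submodule.span_le.2 <| by
    rintro _ ⟨p, hp, rfl⟩
    exact eval_mem_span σ f (hP p hp)

end RowSpan

section Echelon

variable {F α : Type*} [Field F] [LinearOrder α]

/-- Nonempty reduced rows, each starting at a smaller key than every key of the later rows. -/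
inductive IsEchelon : List (FormalSum F α) → Prop
  | nil : IsEchelon []
  | cons {t : F × α} {r : FormalSum F α} {P : List (FormalSum F α)} (hr : IsReduced (t :: r))
    (ht : ∀ p ∈ P, ∀ u ∈ p, t.2 < u.2) (hP : IsEchelon P) : IsEchelon ((t :: r) :: P)

section LeadingKey

variable {k V : Type*} [Field k] [AddCommGroup V] [Module k V] (σ : F →+* k) {f : α → V}
variable {s : Set α}

theorem eval_cons_notMem_rowSpan (hf : LinearIndepOn k f s) {t : F × α} {r : FormalSum F α}
    {P : List (FormalSum F α)} (hr : IsReduced (t :: r)) (ht : ∀ p ∈ P, ∀ u ∈ p, t.2 < u.2)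
    (hrs : ∀ u ∈ t :: r, u.2 ∈ s) (hPs : ∀ p ∈ P, ∀ u ∈ p, u.2 ∈ s) :
    eval σ f (t :: r) ∉ rowSpan σ f P := by
  obtain ⟨hts, hrs⟩ := List.forall_mem_cons.1 hrs
  let later : Set α := {q ∈ s | t.2 < q}
  have indep_insert : LinearIndepOn k f (insert t.2 later) :=
    hf.mono (Set.insert_subset hts (Set.sep_subset s _))
  have lead_notMem : f t.2 ∉ Submodule.span k (f '' later) :=
    ((linearIndepOn_insert (by simp [later])).1 indep_insert).2
  have tail_mem : eval σ f r ∈ Submodule.span k (f '' later) :=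
    eval_mem_span σ f fun u hu => ⟨hrs u hu, hr.lt_of_cons u hu⟩
  have le_later : rowSpan σ f P ≤ Submodule.span k (f '' later) :=
    rowSpan_le_span_image σ f fun p hp u hu => ⟨hPs p hp u hu, ht p hp u hu⟩
  intro h
  rw [eval_cons] at h
  have lead_mem := (Submodule.add_mem_iff_left _ tail_mem).1 (le_later h)
  have : σ t.1 ≠ 0 := (map_ne_zero σ).2 hr.ne_zero_of_cons
  exact lead_notMem ((Submodule.smul_mem_iff _ this).1 lead_mem)

theorem finrank_rowSpan_of_isEchelon (hf : LinearIndepOn k f s) {P : List (FormalSum F α)}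
    (hP : IsEchelon P) (hPs : ∀ p ∈ P, ∀ u ∈ p, u.2 ∈ s) :
    finrank k (rowSpan σ f P) = P.length := by
  induction hP with
  | nil => rw [rowSpan_nil, finrank_bot, List.length_nil]
  | @cons t r P hr ht _ ih =>
    obtain ⟨hrs, hPs⟩ := List.forall_mem_cons.1 hPs
    rw [rowSpan_cons, List.length_cons, ← ih hPs]
    exact finrank_span_singleton_sup (eval_cons_notMem_rowSpan σ hf hr ht hrs hPs)

end LeadingKey

variable [DecidableEq F]

/-- Inserts a row into a list of rows in echelon form, after clearing its entries at the leading
keys of the rows it passes. -/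
def insertRow : FormalSum F α → List (FormalSum F α) → List (FormalSum F α)
  | [], P => P
  | t :: r, [] => [t :: r]
  | t :: r, [] :: P => insertRow (t :: r) P
  | t :: r, (s :: p) :: P =>
    if t.2 < s.2 then (t :: r) :: (s :: p) :: P
    else if s.2 < t.2 then (s :: p) :: insertRow (t :: r) P
    else (s :: p) :: insertRow (add (scale (-(t.1 * s.1⁻¹)) p) r) P

/-- Gaussian elimination: an echelon form of a list of reduced rows. -/
def echelon (rows : List (FormalSum F α)) : List (FormalSum F α) :=
  rows.foldr insertRow []

theorem forall_mem_insertRow {Q : α → Prop} {r : FormalSum F α} {P : List (FormalSum F α)}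
    (hr : ∀ u ∈ r, Q u.2) (hP : ∀ p ∈ P, ∀ u ∈ p, Q u.2) :
    ∀ p ∈ insertRow r P, ∀ u ∈ p, Q u.2 := by
  fun_induction insertRow with
  | case1 => exact hP
  | case2 => exact List.forall_mem_singleton.2 hr
  | case3 t r P ih => exact ih hr (List.forall_mem_cons.1 hP).2
  | case4 => exact List.forall_mem_cons.2 ⟨hr, hP⟩
  | case5 t r s p P _ _ ih =>
    obtain ⟨hp, hP⟩ := List.forall_mem_cons.1 hP
    exact List.forall_mem_cons.2 ⟨hp, ih hr hP⟩
  | case6 t r s p P _ _ ih =>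
    obtain ⟨hp, hP⟩ := List.forall_mem_cons.1 hP
    have hp' : ∀ u ∈ scale (-(t.1 * s.1⁻¹)) p, Q u.2 :=
      forall_mem_scale (List.forall_mem_cons.1 hp).2
    exact List.forall_mem_cons.2 ⟨hp, ih (forall_mem_add hp' (List.forall_mem_cons.1 hr).2) hP⟩

theorem IsEchelon.insertRow {r : FormalSum F α} {P : List (FormalSum F α)} (hr : IsReduced r)
    (hP : IsEchelon P) : IsEchelon (insertRow r P) := by
  fun_induction FormalSum.insertRow with
  | case1 => exact hP
  | case2 => exact hP.cons hr (by simp)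
  | case3 => nomatch hP
  | case4 t r s p P hts =>
    obtain - | ⟨hp, hs, -⟩ := id hP
    refine hP.cons hr (List.forall_mem_cons.2 ⟨?_, fun q hq u hu => hts.trans (hs q hq u hu)⟩)
    exact List.forall_mem_cons.2 ⟨hts, fun u hu => hts.trans (hp.lt_of_cons u hu)⟩
  | case5 t r s p P _ hst ih =>
    obtain - | ⟨hp, hs, hP⟩ := hP
    refine (ih hr hP).cons hp (forall_mem_insertRow (List.forall_mem_cons.2 ⟨hst, ?_⟩) hs)
    exact fun u hu => hst.trans (hr.lt_of_cons u hu)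
  | case6 t r s p P hts hst ih =>
    obtain - | ⟨hp, hs, hP⟩ := hP
    have key_eq : t.2 = s.2 := le_antisymm (not_lt.1 hst) (not_lt.1 hts)
    refine (ih (hr.of_cons.add _) hP).cons hp (forall_mem_insertRow ?_ hs)
    exact forall_mem_add (forall_mem_scale hp.lt_of_cons) (key_eq ▸ hr.lt_of_cons)

variable {k V : Type*} [Field k] [AddCommGroup V] [Module k V] (σ : F →+* k) (f : α → V)

theorem rowSpan_insertRow {r : FormalSum F α} {P : List (FormalSum F α)} (hP : IsEchelon P) :
    rowSpan σ f (insertRow r P) = Submodule.span k {eval σ f r} ⊔ rowSpan σ f P := by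
  fun_induction insertRow with
  | case1 => simp
  | case2 => simp
  | case3 => nomatch hP
  | case4 => simp
  | case5 t r s p P _ _ ih =>
    obtain - | ⟨-, -, hP⟩ := hP
    rw [rowSpan_cons, ih hP, rowSpan_cons, sup_left_comm]
  | case6 t r s p P hts hst ih =>
    obtain - | ⟨hp, -, hP⟩ := hP
    have key_eq : t.2 = s.2 := le_antisymm (not_lt.1 hst) (not_lt.1 hts)
    have cleared : eval σ f (add (scale (-(t.1 * s.1⁻¹)) p) r) =
        eval σ f (t :: r) - σ (t.1 * s.1⁻¹) • eval σ f (s :: p) := by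
      have : σ s.1 ≠ 0 := (map_ne_zero σ).2 hp.ne_zero_of_cons
      simp only [eval_add, eval_scale, eval_cons, key_eq, map_neg, map_mul, map_inv₀, neg_smul,
        smul_add, smul_smul, inv_mul_cancel_right₀ this]
      abel
    rw [rowSpan_cons, ih hP, cleared, rowSpan_cons, ← sup_assoc, span_sup_span_sub_smul, sup_assoc]

theorem isEchelon_echelon {rows : List (FormalSum F α)} (h : ∀ r ∈ rows, IsReduced r) :
    IsEchelon (echelon rows) := by
  induction rows with
  | nil => exact .nil
  | cons r rows ih =>
    obtain ⟨hr, h⟩ := List.forall_mem_cons.1 h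
    exact (ih h).insertRow hr

theorem rowSpan_echelon {rows : List (FormalSum F α)} (h : ∀ r ∈ rows, IsReduced r) :
    rowSpan σ f (echelon rows) = rowSpan σ f rows := by
  induction rows with
  | nil => rfl
  | cons r rows ih =>
    have h' := (List.forall_mem_cons.1 h).2
    rw [rowSpan_cons, ← ih h', ← rowSpan_insertRow σ f (isEchelon_echelon h')]
    rfl

theorem forall_mem_echelon {Q : α → Prop} {rows : List (FormalSum F α)}
    (h : ∀ r ∈ rows, ∀ u ∈ r, Q u.2) : ∀ r ∈ echelon rows, ∀ u ∈ r, Q u.2 := by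
  induction rows with
  | nil => simp [echelon]
  | cons r rows ih =>
    obtain ⟨hr, h⟩ := List.forall_mem_cons.1 h
    exact forall_mem_insertRow hr (ih h)

variable {f} {s : Set α}

theorem finrank_rowSpan_eq_length_echelon (hf : LinearIndepOn k f s)
    {rows : List (FormalSum F α)} (hrows : ∀ r ∈ rows, IsReduced r)
    (hs : ∀ r ∈ rows, ∀ u ∈ r, u.2 ∈ s) :
    finrank k (rowSpan σ f rows) = (echelon rows).length := by
  rw [← rowSpan_echelon σ f hrows]
  exact finrank_rowSpan_of_isEchelon σ hf (isEchelon_echelon hrows) (forall_mem_echelon hs)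

end Echelon

end FormalSum

end Elimination

section Rank

open FormalSum

section Dual

variable {k V M ι μ : Type*} [Field k] [AddCommGroup V] [Module k V] [AddCommGroup M] [Module k M]

theorem span_coordFun_eq_top [LinearOrder ι] [Finite ι] [Finite μ] (b : Basis ι k V)
    (e : Basis μ k M) (n : ℕ) :
    Submodule.span k (coordFun b e.coord n '' {q | IsIncreasingWord n q.1}) = ⊤ := by
  have := Module.Finite.of_basis b
  have := Module.Finite.of_basis e
  set W := Submodule.span k (coordFun b e.coord n '' {q | IsIncreasingWord n q.1})
  have coann_eq_bot : W.dualCoannihilator = ⊥ := by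
    refine eq_bot_iff.2 fun ψ hψ => eq_zero_of_evalWord_eq_zero b fun w hw => ?_
    refine e.forall_coord_eq_zero_iff.1 fun m => ?_
    exact (Submodule.mem_dualCoannihilator ψ).1 hψ _ (Submodule.subset_span ⟨(w, m), hw, rfl⟩)
  rw [← Subspace.dualCoannihilator_dualAnnihilator_eq (W := W), coann_eq_bot,
    Submodule.dualAnnihilator_bot]

theorem linearIndepOn_coordFun {N : ℕ} [Finite μ] (b : Basis (Fin N) k V) (e : Basis μ k M)
    (n : ℕ) : LinearIndepOn k (coordFun b e.coord n) {q | IsIncreasingWord n q.1} := by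
  have := Module.Finite.of_basis b
  have := Module.Finite.of_basis e
  cases nonempty_fintype μ
  let s : Finset (List (Fin N) × μ) := (increasingWords N n).toFinset ×ˢ Finset.univ
  have coe_s : (s : Set (List (Fin N) × μ)) = {q | IsIncreasingWord n q.1} := by
    ext
    simp [s, mem_increasingWords]
  rw [← coe_s]
  refine linearIndependent_of_top_le_span_of_card_eq_finrank ?_ ?_
  · rw [← Set.image_eq_range, coe_s, span_coordFun_eq_top]
  · rw [Subspace.dual_finrank_eq, finrank_alternatingMap, finrank_eq_card_basis b,
      finrank_eq_card_basis e]
    simp [s, card_toFinset_increasingWords]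

end Dual

section Code

theorem mul_add_fin_inj {N a a' : ℕ} {i i' : Fin N} :
    N * a + i = N * a' + i' ↔ a = a' ∧ i = i' := by
  have : NeZero N := ⟨i.pos.ne'⟩
  simpa [mul_comm] using (Nat.divModEquiv N).symm.injective.eq_iff (a := (a, i)) (b := (a', i'))

/-- An injective numbering of the words in `N` letters. -/
def wordCode {N : ℕ} : List (Fin N) → ℕ
  | [] => 0
  | i :: w => N * wordCode w + i + 1

theorem wordCode_injective (N : ℕ) : Function.Injective (wordCode (N := N)) := by
  intro w
  induction w with
  | nil => rintro (_ | _) h <;> simp_all [wordCode]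
  | cons i w ih =>
    rintro (_ | ⟨j, v⟩) h
    · simp [wordCode] at h
    · obtain ⟨hwv, rfl⟩ := mul_add_fin_inj.1 (Nat.succ.inj h)
      rw [ih hwv]

/-- An injective numbering of the pairs of a word in `N` letters and an index below `p`. The
elimination compares keys very often, which is much cheaper for numbers than for words. -/
def keyCode {N p : ℕ} (q : List (Fin N) × Fin p) : ℕ :=
  p * wordCode q.1 + q.2

theorem keyCode_injective (N p : ℕ) : Function.Injective (keyCode (N := N) (p := p)) :=
  fun _ _ h =>
    have ⟨hw, hm⟩ := mul_add_fin_inj.1 h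
    Prod.ext (wordCode_injective N hw) hm

end Code

section Matrix

variable {F : Type*} [Field F] [DecidableEq F] {N p : ℕ}
variable (br : Fin N → Fin N → FormalSum F (Fin N)) (act : Fin N → Fin p → FormalSum F (Fin p))

/-- The row of the matrix of the differential indexed by the word `q.1` and the index `q.2`. -/
def boundaryRow (q : List (Fin N) × Fin p) : FormalSum F ℕ :=
  normalize (mapKeys keyCode (boundary br act q.1 q.2))

/-- The matrix of the differential from cochains of degree `n - 1` to cochains of degree `n`. -/
def boundaryRows (n : ℕ) : List (FormalSum F ℕ) :=
  (increasingWords N n ×ˢ List.finRange p).map (boundaryRow br act)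

theorem setOf_mem_boundaryRows (n : ℕ) :
    {r | r ∈ boundaryRows br act n} = boundaryRow br act '' {q | IsIncreasingWord n q.1} := by
  ext
  simp [boundaryRows, mem_increasingWords]

section CodedCoordFun

variable {k V M : Type*} [CommRing k] [AddCommGroup V] [Module k V] [AddCommGroup M] [Module k M]

/-- The coordinate functional with a given number, and `0` for numbers that encode no index. -/
noncomputable def codedCoordFun (b : Fin N → V) (f : Fin p → Dual k M) (n : ℕ) :
    ℕ → Dual k (V [⋀^Fin n]→ₗ[k] M) :=
  Function.extend keyCode (coordFun b f n) 0

theorem codedCoordFun_comp_keyCode (b : Fin N → V) (f : Fin p → Dual k M) (n : ℕ) :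
    codedCoordFun b f n ∘ keyCode = coordFun b f n :=
  Function.extend_comp (keyCode_injective N p) _ _

end CodedCoordFun

variable {k g M : Type*} [Field k] [LieRing g] [LieAlgebra k g] [AddCommGroup M] [Module k M]
variable [LieRingModule g M] [LieModule k g M] {br act} {σ : F →+* k}

theorem eval_boundaryRow {b : Fin N → g} {f : Fin p → Dual k M}
    (hbr : ∀ x y, ⁅b x, b y⁆ = eval σ b (br x y))
    (hact : ∀ x m u, f m ⁅b x, u⁆ = eval σ (fun m' => f m' u) (act x m)) (n : ℕ)
    (q : List (Fin N) × Fin p) :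
    eval σ (codedCoordFun b f n) (boundaryRow br act q) =
      (ceDiff k g M n).dualMap (coordFun b f (n + 1) q) := by
  rw [boundaryRow, eval_normalize, eval_mapKeys, codedCoordFun_comp_keyCode]
  ext ψ
  rw [LinearMap.dualMap_apply, ← eval_coordFun_boundary hbr hact]
  exact map_eval σ _ _ (LinearMap.applyₗ (R := k) ψ)

theorem rowSpan_boundaryRows {b : Basis (Fin N) k g} {e : Basis (Fin p) k M}
    (hbr : ∀ x y, ⁅b x, b y⁆ = eval σ b (br x y))
    (hact : ∀ x m u, e.coord m ⁅b x, u⁆ = eval σ (fun m' => e.coord m' u) (act x m)) (n : ℕ) :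
    rowSpan σ (codedCoordFun b e.coord n) (boundaryRows br act (n + 1)) =
      LinearMap.range (ceDiff k g M n).dualMap := by
  rw [LinearMap.range_eq_map, ← span_coordFun_eq_top b e, Submodule.map_span, rowSpan,
    setOf_mem_boundaryRows, Set.image_image, Set.image_image]
  simp only [eval_boundaryRow hbr hact]

theorem finrank_range_ceDiff_eq_length_echelon {b : Basis (Fin N) k g} {e : Basis (Fin p) k M}
    (hbr : ∀ x y, ⁅b x, b y⁆ = eval σ b (br x y))
    (hact : ∀ x m u, e.coord m ⁅b x, u⁆ = eval σ (fun m' => e.coord m' u) (act x m)) (n : ℕ) :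
    finrank k (LinearMap.range (ceDiff k g M n)) =
      (echelon (boundaryRows br act (n + 1))).length := by
  rw [← LinearMap.finrank_range_dualMap_eq_finrank_range, ← rowSpan_boundaryRows hbr hact]
  have indep : LinearIndepOn k (codedCoordFun b e.coord n)
      (keyCode '' {q : List (Fin N) × Fin p | IsIncreasingWord n q.1}) := by
    refine LinearIndepOn.image_of_comp keyCode (codedCoordFun b e.coord n) ?_
    rw [codedCoordFun_comp_keyCode]
    exact linearIndepOn_coordFun b e n
  refine finrank_rowSpan_eq_length_echelon σ indep ?_ ?_
  · exact List.forall_mem_map.2 fun _ _ => isReduced_normalize _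
  · refine List.forall_mem_map.2 fun q hq => forall_mem_normalize (forall_mem_mapKeys ?_)
    have hq := mem_increasingWords.1 (List.mem_product.1 hq).1
    exact fun t ht => ⟨t.2, isIncreasingWord_of_mem_boundary hq t ht, rfl⟩

end Matrix

end Rank

section SpecialLinear

open LieAlgebra SpecialLinear FormalSum

theorem mem_center_sl_iff {n R : Type*} [Fintype n] [DecidableEq n] [CommRing R] {A : sl n R} :
    A ∈ center R (sl n R) ↔ A.1 ∈ Set.range (Matrix.scalar n) := by
  rw [Matrix.mem_range_scalar_iff_commute_single]
  have lie_eq_zero_iff (B : sl n R) : ⁅B, A⁆ = 0 ↔ Commute B.1 A.1 := by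
    rw [Subtype.ext_iff, sl_bracket, ZeroMemClass.coe_zero, sub_eq_zero, commute_iff_eq]
  refine (LieModule.mem_maxTrivSubmodule R _ _ A).trans ⟨fun h i j hij => ?_, fun h B => ?_⟩
  · exact (lie_eq_zero_iff (single i j hij 1)).1 (h _)
  · obtain ⟨r, hr⟩ := Matrix.mem_range_scalar_of_commute_single fun _ _ => h _ _
    rw [lie_eq_zero_iff, ← hr]
    exact (Matrix.scalar_commute r (fun _ => mul_comm _ _) _).symm

section Coordinates

variable {R S : Type*} [Ring R] [Ring S]

/-- The `3 × 3` matrix with given coordinates. The last of the eight coordinates is that of the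
identity matrix, which is traceless in characteristic `3` and spans the center. -/
def ofCoords (v : Fin 8 → R) : Matrix (Fin 3) (Fin 3) R :=
  !![v 6 + v 7, v 0, v 1; v 2, v 7 - v 6, v 3; v 4, v 5, v 7]

/-- The coordinates of a traceless `3 × 3` matrix in characteristic `3`. -/
def coords (A : Matrix (Fin 3) (Fin 3) R) : Fin 8 → R :=
  ![A 0 1, A 0 2, A 1 0, A 1 2, A 2 0, A 2 1, A 0 0 - A 2 2, A 2 2]

theorem ofCoords_map (σ : R →+* S) (v : Fin 8 → R) : (ofCoords v).map σ = ofCoords (σ ∘ v) := by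
  ext i j
  fin_cases i <;> fin_cases j <;> simp [ofCoords]

theorem coords_map (σ : R →+* S) (A : Matrix (Fin 3) (Fin 3) R) :
    coords (A.map σ) = σ ∘ coords A := by
  ext i
  fin_cases i <;> simp [coords]

theorem coords_ofCoords (v : Fin 8 → R) : coords (ofCoords v) = v := by
  ext i
  fin_cases i <;> simp [coords, ofCoords]

variable [CharP R 3]

theorem trace_ofCoords (v : Fin 8 → R) : (ofCoords v).trace = 0 := by
  have three_eq_zero : (3 : R) = 0 := CharP.cast_eq_zero R 3
  have : (ofCoords v).trace = 3 * v 7 := by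
    rw [Matrix.trace_fin_three]
    simp only [ofCoords, Matrix.of_apply, Matrix.cons_val]
    noncomm_ring
  rw [this, three_eq_zero, zero_mul]

theorem ofCoords_coords {A : Matrix (Fin 3) (Fin 3) R} (hA : A.trace = 0) :
    ofCoords (coords A) = A := by
  have three_eq_zero : (3 : R) = 0 := CharP.cast_eq_zero R 3
  have : A 2 2 - (A 0 0 - A 2 2) = A 1 1 :=
    calc A 2 2 - (A 0 0 - A 2 2) = 3 * A 2 2 + A 1 1 - A.trace := by
          rw [Matrix.trace_fin_three]
          noncomm_ring
      _ = A 1 1 := by simp [three_eq_zero, hA]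
  ext i j
  fin_cases i <;> fin_cases j <;> simp [ofCoords, coords, this]

theorem mem_range_scalar_iff_coords {A : Matrix (Fin 3) (Fin 3) R} (hA : A.trace = 0) :
    A ∈ Set.range (Matrix.scalar (Fin 3)) ↔ ∀ m : Fin 7, coords A m.castSucc = 0 := by
  constructor
  · rintro ⟨r, rfl⟩ m
    fin_cases m <;> simp [coords]
  · intro h
    refine ⟨A 2 2, ?_⟩
    rw [← ofCoords_coords hA]
    simp only [Fin.forall_fin_succ] at h
    ext i j
    fin_cases i <;> fin_cases j <;> simp_all [ofCoords, coords]

end Coordinates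

/-- The structure constants of `sl₃` in the basis underlying `coords`: the coordinates of the
bracket of the basis vectors `x` and `y`. -/
def structureConst (x y : Fin 8) : Fin 8 → ZMod 3 :=
  let e (z : Fin 8) : Matrix (Fin 3) (Fin 3) (ZMod 3) := ofCoords (Pi.single z 1)
  coords (e x * e y - e y * e x)

/-- The bracket of two basis vectors of `sl₃`. -/
def sl3Bracket (x y : Fin 8) : FormalSum (ZMod 3) (Fin 8) :=
  ofFn (structureConst x y) (List.finRange 8)

/-- The coordinate functional `m` of `sl₃` modulo its center, composed with the action of the basis
vector `x` of `sl₃`. -/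
def sl3Action (x : Fin 8) (m : Fin 7) : FormalSum (ZMod 3) (Fin 7) :=
  ofFn (fun y => structureConst x y.castSucc m.castSucc) (List.finRange 7)

variable (k : Type*) [Field k] [CharP k 3]

/-- The coordinates on `sl₃(k)`. -/
def sl3EquivFun : sl3 k ≃ₗ[k] (Fin 8 → k) where
  toFun A := coords A.1
  map_add' A B := by
    ext i
    fin_cases i <;> simp [coords, sub_add_sub_comm]
  map_smul' c A := by
    ext i
    fin_cases i <;> simp [coords, mul_sub]
  invFun v := ⟨ofCoords v, trace_ofCoords v⟩
  left_inv A := Subtype.ext (ofCoords_coords A.2)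
  right_inv := coords_ofCoords

/-- The basis of `sl₃(k)` underlying `coords`. -/
noncomputable def sl3Basis : Basis (Fin 8) k (sl3 k) :=
  Basis.ofEquivFun (sl3EquivFun k)

theorem sl3Basis_coord_apply (x : Fin 8) (A : sl3 k) : (sl3Basis k).coord x A = coords A.1 x := by
  simp [sl3Basis, sl3EquivFun]

theorem coe_sl3Basis (x : Fin 8) : (sl3Basis k x).1 =
    (ofCoords (Pi.single x 1)).map (ZMod.castHom (dvd_refl 3) k) := by
  have comp_single : ZMod.castHom (dvd_refl 3) k ∘ Pi.single x 1 = Pi.single x 1 := by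
    ext y
    simp [Pi.single_apply, apply_ite]
  rw [ofCoords_map, comp_single]
  simp [sl3Basis, sl3EquivFun]

theorem sl3Basis_coord_lie (x y z : Fin 8) : (sl3Basis k).coord z ⁅sl3Basis k x, sl3Basis k y⁆ =
    ZMod.castHom (dvd_refl 3) k (structureConst x y z) := by
  rw [sl3Basis_coord_apply, sl_bracket, coe_sl3Basis, coe_sl3Basis, ← Matrix.map_mul,
    ← Matrix.map_mul, ← Matrix.map_sub _ (map_sub _), coords_map]
  rfl

theorem lie_sl3Basis (x y : Fin 8) : ⁅sl3Basis k x, sl3Basis k y⁆ =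
    eval (ZMod.castHom (dvd_refl 3) k) (sl3Basis k) (sl3Bracket x y) := by
  rw [sl3Bracket, eval_ofFn, ← List.ofFn_eq_map, List.sum_ofFn, ← (sl3Basis k).sum_repr ⁅_, _⁆]
  simp only [← sl3Basis_coord_lie, Basis.coord_apply]

/-- The first seven coordinates, which determine an element of `sl₃(k)` modulo the center. -/
def centralQuotientCoords : sl3 k →ₗ[k] (Fin 7 → k) :=
  LinearMap.funLeft k k Fin.castSucc ∘ₗ (sl3EquivFun k).toLinearMap

theorem centralQuotientCoords_surjective : Function.Surjective (centralQuotientCoords k) :=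
  (LinearMap.funLeft_surjective_of_injective k k _ (Fin.castSucc_injective 7)).comp
    (sl3EquivFun k).surjective

theorem ker_centralQuotientCoords :
    LinearMap.ker (centralQuotientCoords k) = (center k (sl3 k)).toSubmodule := by
  ext A
  rw [LieSubmodule.mem_toSubmodule, mem_center_sl_iff, mem_range_scalar_iff_coords A.2]
  exact funext_iff

/-- The basis of `sl₃(k)` modulo its center given by the first seven vectors of `sl3Basis`. -/
noncomputable def sl3ModCenterBasis : Basis (Fin 7) k (sl3ModCenter k) :=
  Basis.ofEquivFun <| (Submodule.quotEquivOfEq _ _ (ker_centralQuotientCoords k).symm).trans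
    ((centralQuotientCoords k).quotKerEquivOfSurjective (centralQuotientCoords_surjective k))

theorem sl3ModCenterBasis_coord_mk (m : Fin 7) (A : sl3 k) :
    (sl3ModCenterBasis k).coord m (LieSubmodule.Quotient.mk A) =
      (sl3Basis k).coord m.castSucc A := by
  rw [sl3Basis_coord_apply]
  rfl

theorem sl3ModCenterBasis_apply (m : Fin 7) :
    sl3ModCenterBasis k m = LieSubmodule.Quotient.mk (sl3Basis k m.castSucc) := by
  refine (sl3ModCenterBasis k).ext_elem fun y => ?_
  rw [← Basis.coord_apply, ← Basis.coord_apply, sl3ModCenterBasis_coord_mk]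
  simp [Finsupp.single_apply]

theorem sl3ModCenterBasis_coord_lie (x : Fin 8) (m : Fin 7) (u : sl3ModCenter k) :
    (sl3ModCenterBasis k).coord m ⁅sl3Basis k x, u⁆ =
      eval (ZMod.castHom (dvd_refl 3) k) (fun m' => (sl3ModCenterBasis k).coord m' u)
        (sl3Action x m) := by
  have lie_basis (y : Fin 7) : (sl3ModCenterBasis k).coord m ⁅sl3Basis k x, sl3ModCenterBasis k y⁆ =
      ZMod.castHom (dvd_refl 3) k (structureConst x y.castSucc m.castSucc) := by
    rw [sl3ModCenterBasis_apply, ← sl3Basis_coord_lie, ← sl3ModCenterBasis_coord_mk]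
    rfl
  rw [sl3Action, eval_ofFn, ← List.ofFn_eq_map, List.sum_ofFn]
  conv_lhs => rw [← (sl3ModCenterBasis k).sum_repr u]
  simp only [lie_sum, lie_smul, map_sum, map_smul, lie_basis, smul_eq_mul, mul_comm,
    Basis.coord_apply]

end SpecialLinear

section Computation

open FormalSum

set_option maxRecDepth 100000 in
theorem length_echelon_boundaryRows_five :
    (echelon (boundaryRows sl3Bracket sl3Action 5)).length = 230 := by
  decide +kernel

set_option maxRecDepth 100000 in
theorem length_echelon_boundaryRows_six :
    (echelon (boundaryRows sl3Bracket sl3Action 6)).length = 154 := by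
  decide +kernel

end Computation

section Ranks

variable (k : Type*) [Field k] [CharP k 3]

theorem finrank_range_ceDiff_four :
    finrank k (LinearMap.range (ceDiff k (sl3 k) (sl3ModCenter k) 4)) = 230 :=
  (finrank_range_ceDiff_eq_length_echelon (lie_sl3Basis k) (sl3ModCenterBasis_coord_lie k) 4).trans
    length_echelon_boundaryRows_five

theorem finrank_range_ceDiff_five :
    finrank k (LinearMap.range (ceDiff k (sl3 k) (sl3ModCenter k) 5)) = 154 :=
  (finrank_range_ceDiff_eq_length_echelon (lie_sl3Basis k) (sl3ModCenterBasis_coord_lie k) 5).trans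
    length_echelon_boundaryRows_six

end Ranks

end ChevalleyEilenberg

open ChevalleyEilenberg Module in
theorem H5_quotient_module_dim_general (k : Type*) [Field k] [CharP k 3] :
    Module.finrank k (ceH k (sl3 k) (sl3ModCenter k) 5) = 8 := by
  have := Module.Finite.of_basis (sl3Basis k)
  have := Module.Finite.of_basis (sl3ModCenterBasis k)
  have dim_count : finrank k (ceH k (sl3 k) (sl3ModCenter k) 5) + 230 + 154 =
      Nat.choose 8 5 * 7 := by
    rw [← finrank_range_ceDiff_four k, ← finrank_range_ceDiff_five k,
      finrank_ceH_succ_add_ranks k (sl3 k) (sl3ModCenter k) 4,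
      finrank_eq_card_basis (sl3Basis k), finrank_eq_card_basis (sl3ModCenterBasis k),
      Fintype.card_fin, Fintype.card_fin]
  have dim_cochains : Nat.choose 8 5 * 7 = 392 := rfl
  omega

theorem H5_quotient_module_dim (k : Type*) [Field k] [IsAlgClosed k] [CharP k 3] :
    Module.finrank k (ceH k (sl3 k) (sl3ModCenter k) 5) = 8 :=
  H5_quotient_module_dim_general k
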